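/- arXiv:2605.28012 — 2 statements merged into one kernel-verified Lean document; each statement's English description precedes it below -/
import Mathlib

section
/- Let r, s > 1 and let m_1, ..., m_r and n_1, ..., n_s be positive integers, with the cyclic conventions m_{r+1} = m_1 and n_{s+1} = n_1. Then for all integers a, b with 0 ≤ a ≤ s and 1 ≤ b ≤ r, the alternating sum F_{r,s}^{(b)}(m; n; a; q) is a polynomial in q with nonnegative integer coefficients. -/
open Finset

noncomputable section

/-- The `q`-integer `[n] = (1 - x^n)/(1 - x)` at the value `x`. -/
def qint (x : RatFunc ℚ) (n : ℕ) : RatFunc ℚ := (1 - x ^ n) / (1 - x)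

/-- The `q`-factorial `[n]! = [1][2]⋯[n]`, with `[0]! = 1`. -/
def qfact (x : RatFunc ℚ) (n : ℕ) : RatFunc ℚ := ∏ i ∈ Finset.range n, qint x (i + 1)

/-- The Gaussian (q-binomial) coefficient `[N choose K]`, equal to
`[N]!/([K]![N-K]!)` if `0 ≤ K ≤ N`, and `0` otherwise. -/
def qbinom (x : RatFunc ℚ) (N K : ℤ) : RatFunc ℚ :=
  if 0 ≤ K ∧ K ≤ N then qfact x N.toNat / (qfact x K.toNat * qfact x (N - K).toNat) else 0

/-- The alternating sum `F_{r,s}^{(b)}(m; n; a; x)`.  The cyclic vectors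
`(m_1, …, m_r)` and `(n_1, …, n_s)` are given as functions `m n : ℕ → ℕ` on
`0, …, r-1` and `0, …, s-1` respectively, with cyclic successor `(i+1) % r`
(so `m_{r+1} = m_1` and `n_{s+1} = n_1`). -/
def F (r s a b : ℕ) (m n : ℕ → ℕ) (x : RatFunc ℚ) : RatFunc ℚ :=
  (qfact x (m 0) * qfact x (n 0) * qfact x (m (r - 1) + n (s - 1) + 1)) /
      (qfact x (m 0 + m (r - 1) + 1) * qfact x (n 0 + n (s - 1))) *
    ∑ k ∈ Finset.Icc (-(n 0 : ℤ)) ((n 0 : ℤ)),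
      (-1 : RatFunc ℚ) ^ k *
        x ^ ((a : ℤ) * k ^ 2 + (2 * (b : ℤ) - 1) * (k * (k - 1) / 2)) *
        (∏ i ∈ Finset.range r,
          qbinom x ((m i : ℤ) + (m ((i + 1) % r) : ℤ) + 1) ((m i : ℤ) + k)) *
        (∏ j ∈ Finset.range s,
          qbinom x ((n j : ℤ) + (n ((j + 1) % s) : ℤ)) ((n j : ℤ) + k))

/-- A rational function lies in `ℕ[q]` if it equals a polynomial in `q`
with nonnegative integer coefficients. -/
def IsNonnegPoly (f : RatFunc ℚ) : Prop :=
  ∃ p : Polynomial ℕ, f = algebraMap (Polynomial ℚ) (RatFunc ℚ) (p.map (Nat.castRingHom ℚ))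

/-- The subsemiring of rational functions that are polynomials with coefficients in `ℕ`. -/
def nonnegPoly : Subsemiring (RatFunc ℚ) :=
  ((algebraMap (Polynomial ℚ) (RatFunc ℚ)).comp
    (Polynomial.mapRingHom (Nat.castRingHom ℚ))).rangeS

lemma isNonnegPoly_iff_mem (f : RatFunc ℚ) : IsNonnegPoly f ↔ f ∈ nonnegPoly := by
  simp only [IsNonnegPoly, nonnegPoly, RingHom.mem_rangeS, RingHom.comp_apply,
    Polynomial.coe_mapRingHom, eq_comm]

/-- The variable `q` of the field of rational functions. -/
local notation "q" => (RatFunc.X : RatFunc ℚ)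

lemma X_ne_zero : q ≠ 0 := RatFunc.X_ne_zero

lemma X_mem_nonnegPoly : q ∈ nonnegPoly :=
  ⟨Polynomial.X, by simp⟩

lemma X_zpow_mem_nonnegPoly {z : ℤ} (hz : 0 ≤ z) : q ^ z ∈ nonnegPoly := by
  lift z to ℕ using hz
  rw [zpow_natCast]
  exact pow_mem X_mem_nonnegPoly z

lemma X_pow_ne_one {n : ℕ} (hn : n ≠ 0) : q ^ n ≠ 1 := by
  intro h
  rw [← RatFunc.algebraMap_X, ← map_pow, ← map_one (algebraMap (Polynomial ℚ) (RatFunc ℚ))] at h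
  have h' := congrArg Polynomial.natDegree (RatFunc.algebraMap_injective ℚ h)
  simp [hn] at h'

lemma one_sub_X_ne_zero : (1 - q) ≠ 0 := by
  have h := X_pow_ne_one one_ne_zero
  rw [pow_one] at h
  exact sub_ne_zero.2 h.symm

/-- The `q`-integer `(1 - q^z)/(1 - q)` for an integer `z`. -/
def qintZ (z : ℤ) : RatFunc ℚ := (1 - q ^ z) / (1 - q)

lemma qintZ_natCast (n : ℕ) : qintZ n = qint q n := by
  simp [qintZ, qint]

lemma qintZ_zero : qintZ 0 = 0 := by simp [qintZ]

lemma qintZ_add (y z : ℤ) : qintZ (y + z) = qintZ y + q ^ y * qintZ z := by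
  have h := one_sub_X_ne_zero
  simp only [qintZ, zpow_add₀ X_ne_zero]
  field_simp
  ring

lemma one_add_X_zpow_mul_qintZ (z k : ℤ) :
    (1 + q ^ k) * qintZ z = qintZ (z + k) + q ^ k * qintZ (z - k) := by
  have h1 := qintZ_add k (z - k)
  have h2 := qintZ_add k z
  rw [add_sub_cancel] at h1
  rw [add_comm k] at h2
  linear_combination h1 - h2

lemma qint_ne_zero {n : ℕ} (hn : n ≠ 0) : qint q n ≠ 0 :=
  div_ne_zero (sub_ne_zero.2 (X_pow_ne_one hn).symm) one_sub_X_ne_zero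

lemma qfact_ne_zero (n : ℕ) : qfact q n ≠ 0 :=
  Finset.prod_ne_zero_iff.2 fun i _ => qint_ne_zero i.succ_ne_zero

lemma qfact_zero : qfact q 0 = 1 := by simp [qfact]

lemma qfact_succ (n : ℕ) : qfact q (n + 1) = qfact q n * qint q (n + 1) :=
  Finset.prod_range_succ _ _

/-- The reciprocal `1/[z]!` of the `q`-factorial, extended by `0` to negative integers. -/
def qfactInv (z : ℤ) : RatFunc ℚ := if 0 ≤ z then (qfact q z.toNat)⁻¹ else 0

lemma qfactInv_of_neg {z : ℤ} (hz : z < 0) : qfactInv z = 0 := if_neg (not_le.2 hz)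

lemma qfactInv_natCast (n : ℕ) : qfactInv n = (qfact q n)⁻¹ := by simp [qfactInv]

lemma qfactInv_zero : qfactInv 0 = 1 := by simp [qfactInv, qfact_zero]

lemma qfact_mul_qfactInv (n : ℕ) : qfact q n * qfactInv n = 1 := by
  rw [qfactInv_natCast, mul_inv_cancel₀ (qfact_ne_zero n)]

lemma qintZ_mul_qfactInv (z : ℤ) : qintZ z * qfactInv z = qfactInv (z - 1) := by
  rcases lt_trichotomy z 0 with hz | rfl | hz
  · rw [qfactInv_of_neg hz, qfactInv_of_neg (by omega), mul_zero]
  · rw [qintZ_zero, zero_mul, qfactInv_of_neg (by omega)]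
  · obtain ⟨n, rfl⟩ : ∃ n : ℕ, z = ((n + 1 : ℕ) : ℤ) := ⟨(z - 1).toNat, by omega⟩
    have h : ((n + 1 : ℕ) : ℤ) - 1 = (n : ℕ) := by push_cast; ring
    rw [h, qfactInv_natCast, qfactInv_natCast, qintZ_natCast, qfact_succ]
    have h1 := qint_ne_zero n.succ_ne_zero
    have h2 := qfact_ne_zero n
    field_simp

lemma qbinom_eq (N : ℕ) (K : ℤ) :
    qbinom q N K = qfact q N * qfactInv K * qfactInv (N - K) := by
  unfold qbinom qfactInv
  by_cases h0 : 0 ≤ K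
  · by_cases h1 : K ≤ N
    · have h2 : 0 ≤ (N : ℤ) - K := by omega
      simp [h0, h1, div_eq_mul_inv, mul_assoc, mul_comm]
    · have h2 : ¬ 0 ≤ (N : ℤ) - K := by omega
      simp [h1]
  · simp [h0]

lemma qfact_add_mul_qfactInv_mem (a b : ℕ) :
    qfact q (a + b) * qfactInv a * qfactInv b ∈ nonnegPoly := by
  induction a generalizing b with
  | zero => simp [qfactInv_zero, qfact_mul_qfactInv, one_mem]
  | succ a iha =>
    induction b with
    | zero =>
      rw [Nat.cast_zero, qfactInv_zero, add_zero, qfact_mul_qfactInv, one_mul]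
      exact one_mem _
    | succ b ihb =>
      have ha := qintZ_mul_qfactInv ((a + 1 : ℕ) : ℤ)
      have hb := qintZ_mul_qfactInv ((b + 1 : ℕ) : ℤ)
      have hab := qintZ_add ((a + 1 : ℕ) : ℤ) ((b + 1 : ℕ) : ℤ)
      rw [← Nat.cast_add, qintZ_natCast] at hab
      rw [show ((a + 1 : ℕ) : ℤ) - 1 = (a : ℕ) by push_cast; ring] at ha
      rw [show ((b + 1 : ℕ) : ℤ) - 1 = (b : ℕ) by push_cast; ring] at hb
      have key : qfact q (a + 1 + (b + 1)) * qfactInv ((a + 1 : ℕ) : ℤ)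
            * qfactInv ((b + 1 : ℕ) : ℤ)
          = qfact q (a + (b + 1)) * qfactInv a * qfactInv ((b + 1 : ℕ) : ℤ)
            + q ^ (a + 1) * (qfact q (a + 1 + b) * qfactInv ((a + 1 : ℕ) : ℤ) * qfactInv b) := by
        rw [← add_assoc (a + 1) b 1, qfact_succ, add_assoc (a + 1) b 1, hab, zpow_natCast,
          show a + (b + 1) = a + 1 + b by ring, ← ha, ← hb]
        ring
      rw [key]
      exact add_mem (iha (b + 1)) (mul_mem (pow_mem X_mem_nonnegPoly _) ihb)

lemma qfact_mul_qfactInv_sub_mem {c t : ℕ} (h : t ≤ c) :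
    qfact q c * qfactInv ((c : ℤ) - t) * qfactInv t ∈ nonnegPoly := by
  obtain ⟨d, rfl⟩ := Nat.exists_eq_add_of_le' h
  rw [show ((d + t : ℕ) : ℤ) - t = d by push_cast; ring]
  exact qfact_add_mul_qfactInv_mem d t

/-- The `q`-Vandermonde convolution. -/
lemma qVandermonde (M : ℕ) (N K : ℤ) (S : ℕ) (hS : (S : ℤ) = M + N) :
    ∑ j ∈ range (M + 1), q ^ ((M - j) * (K - j)) * qfactInv j * qfactInv (M - j)
        * qfactInv (K - j) * qfactInv (N - K + j)
      = qfact q S * qfactInv M * qfactInv N * qfactInv K * qfactInv (S - K) := by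
  induction M generalizing N with
  | zero =>
    obtain rfl : N = S := by simpa using hS.symm
    simp only [zero_add, range_one, sum_singleton, Nat.cast_zero, sub_zero, zero_mul, zpow_zero,
      qfactInv_zero, add_zero, mul_one, one_mul, qfact_mul_qfactInv]
  | succ M ih =>
    have hM : qintZ ((M + 1 : ℕ) : ℤ) ≠ 0 := by
      rw [qintZ_natCast]; exact qint_ne_zero M.succ_ne_zero
    refine mul_left_cancel₀ hM ?_
    have ih' := congrArg (qintZ (N + 1) * ·) (ih (N + 1) (by rw [hS]; push_cast; ring))
    have hN := qintZ_mul_qfactInv (N + 1)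
    have hM' := qintZ_mul_qfactInv ((M + 1 : ℕ) : ℤ)
    rw [add_sub_cancel_right] at hN
    rw [show ((M + 1 : ℕ) : ℤ) - 1 = M by push_cast; ring] at hM'
    trans qintZ (N + 1) * (qfact q S * qfactInv M * qfactInv (N + 1) * qfactInv K
        * qfactInv (S - K))
    swap
    · rw [← hN, ← hM']; ring
    refine Eq.trans ?_ ih'
    have split : ∀ j : ℕ, qintZ ((M + 1 : ℕ) : ℤ) * (q ^ ((((M + 1 : ℕ) : ℤ) - j) * (K - j))
        * qfactInv j * qfactInv (((M + 1 : ℕ) : ℤ) - j) * qfactInv (K - j)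
        * qfactInv (N - K + j))
      = q ^ (((M : ℤ) + 1 - j) * (K - j)) * qfactInv j * qfactInv ((M : ℤ) - j)
          * qfactInv (K - j) * qfactInv (N - K + j)
        + q ^ (((M : ℤ) + 1 - j) * (K - j + 1)) * qfactInv ((j : ℤ) - 1)
          * qfactInv ((M : ℤ) + 1 - j) * qfactInv (K - j) * qfactInv (N - K + j) := by
      intro j
      have h1 := qintZ_add ((M : ℤ) + 1 - j) j
      have h2 := qintZ_mul_qfactInv ((M : ℤ) + 1 - j)
      have h3 := qintZ_mul_qfactInv (j : ℤ)
      rw [show (M : ℤ) + 1 - j - 1 = M - j by ring] at h2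
      push_cast
      rw [← h2, ← h3, show (M : ℤ) + 1 = M + 1 - j + j by ring, h1,
        mul_add ((M : ℤ) + 1 - j + j - j), zpow_add₀ X_ne_zero, mul_one]
      simp only [sub_add_cancel]
      ring
    rw [mul_sum, sum_congr rfl fun j _ => split j, sum_add_distrib, sum_range_succ,
      sum_range_succ' _ (M + 1),
      qfactInv_of_neg (z := (M : ℤ) - ((M + 1 : ℕ) : ℤ)) (by push_cast; omega),
      qfactInv_of_neg (z := ((0 : ℕ) : ℤ) - 1) (by norm_num)]
    simp only [mul_zero, zero_mul, add_zero]
    rw [← sum_add_distrib]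
    rw [mul_sum]
    refine sum_congr rfl fun j _ => ?_
    have h1 := qintZ_mul_qfactInv (K - j)
    have h2 := qintZ_mul_qfactInv (N + 1 - K + j)
    have h3 := qintZ_add (K - j) (N + 1 - K + j)
    rw [show N + 1 - K + j - 1 = N - K + j by ring] at h2
    rw [show K - j + (N + 1 - K + j) = N + 1 by ring] at h3
    push_cast
    rw [show K - ((j : ℤ) + 1) = K - j - 1 by ring,
      show N - K + ((j : ℤ) + 1) = N + 1 - K + j by ring,
      ← h1, ← h2, h3, show (M : ℤ) + 1 - (j + 1) = M - j by ring,
      show ((M : ℤ) + 1 - j) * (K - j) = (M - j) * (K - j) + (K - j) by ring,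
      zpow_add₀ X_ne_zero, show K - (j : ℤ) - 1 + 1 = K - j by ring, add_sub_cancel_right]
    ring

/-- The `q`-Vandermonde convolution, summed in the opposite order. -/
lemma qVandermonde_reverse (M : ℕ) (N K : ℤ) (S : ℕ) (hS : (S : ℤ) = M + N) :
    ∑ j ∈ range (M + 1), q ^ (j * (N - K + j)) * qfactInv j * qfactInv (M - j)
        * qfactInv (K - j) * qfactInv (N - K + j)
      = qfact q S * qfactInv M * qfactInv N * qfactInv K * qfactInv (S - K) := by
  have h := qVandermonde M N (S - K) S hS
  rw [← sum_range_reflect] at h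
  rw [show (S : ℤ) - (S - K) = K by ring] at h
  rw [mul_right_comm _ (qfactInv K), ← h]
  refine sum_congr rfl fun j hj => ?_
  have hj' : ((M + 1 - 1 - j : ℕ) : ℤ) = M - j := by
    rw [mem_range] at hj
    omega
  rw [hj', hS, show (M : ℤ) - (M - j) = j by ring,
    show (M : ℤ) + N - K - (M - j) = N - K + j by ring,
    show N - ((M : ℤ) + N - K) + (M - j) = K - j by ring]
  ring

/-- The product `1/([h+k]![h+ε-k]!)`; for `ε = 0` and `ε = 1` these are the factors of the
two kinds of cyclic products of Gaussian coefficients. -/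
def wing (ε h : ℕ) (k : ℤ) : RatFunc ℚ := qfactInv (h + k) * qfactInv (h + ε - k)

lemma wing_eq_zero {ε h : ℕ} {k : ℤ} (hk : (h : ℤ) + k < 0 ∨ (h : ℤ) + ε - k < 0) :
    wing ε h k = 0 := by
  rcases hk with hk | hk
  · rw [wing, qfactInv_of_neg hk, zero_mul]
  · rw [wing, qfactInv_of_neg hk, mul_zero]

lemma sum_wing_reindex {ε : ℕ} (hε : ε ≤ 1) (h g M : ℕ) (k : ℤ) (hM : (M : ℤ) = h + ε - k)
    (w : ℤ → RatFunc ℚ) :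
    ∑ j ∈ range (M + 1), w j * qfactInv j * qfactInv (M - j) * qfactInv (h + k - j)
        * qfactInv (g + k - (h + k) + j)
      = ∑ t ∈ range (h + 1), w (h - t) * qfactInv (h - t) * qfactInv (g - t) * wing ε t k := by
  rw [← sum_range_reflect _ (h + 1)]
  refine sum_congr_of_eq_on_inter (fun j _ hj => ?_) (fun j hj hj' => ?_) (fun j _ hj => ?_)
  · rw [mem_range, not_lt] at hj
    rcases lt_or_ge ((M : ℤ) - j) 0 with h1 | h1
    · rw [qfactInv_of_neg h1]; ring
    · rw [qfactInv_of_neg (z := (h : ℤ) + k - j) (by omega)]; ring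
  · rw [mem_range] at hj hj'
    rw [wing_eq_zero (by omega), mul_zero]
  · rw [mem_range] at hj
    have hj' : ((h + 1 - 1 - j : ℕ) : ℤ) = h - j := by omega
    rw [wing, hj', hM, show (h : ℤ) - (h - j) = j by ring,
      show (h : ℤ) - j + ε - k = h + ε - k - j by ring,
      show (g : ℤ) + k - (h + k) + j = g - (h - j) by ring,
      show (h : ℤ) - j + k = h + k - j by ring]
    ring

lemma qfact_mul_wing_mul_wing {ε : ℕ} (hε : ε ≤ 1) (h g : ℕ) (k : ℤ) :
    qfact q (h + g + ε) * wing ε h k * wing ε g k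
      = ∑ t ∈ range (h + 1), q ^ (((t : ℤ) + ε - k) * (t + k)) * qfactInv (h - t)
          * qfactInv (g - t) * wing ε t k := by
  rcases lt_or_ge ((h : ℤ) + ε - k) 0 with hk | hk
  · rw [wing_eq_zero (Or.inr hk), sum_eq_zero]
    · ring
    · intro t ht
      rw [mem_range] at ht
      rw [wing_eq_zero (by omega), mul_zero]
  · obtain ⟨M, hM⟩ := Int.eq_ofNat_of_zero_le hk
    have hV := qVandermonde M (g + k) (h + k) (h + g + ε) (by rw [← hM]; push_cast; ring)
    rw [sum_wing_reindex hε h g M k hM.symm fun j => q ^ ((M - j) * (h + k - j))] at hV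
    rw [← hM] at hV
    rw [wing, wing, show (g : ℤ) + ε - k = ((h + g + ε : ℕ) : ℤ) - (h + k) by push_cast; ring]
    refine Eq.trans ?_ (hV.symm.trans (sum_congr rfl fun t _ => ?_))
    · ring
    · rw [show (h : ℤ) + ε - k - (h - t) = t + ε - k by ring,
        show (h : ℤ) + k - (h - t) = t + k by ring]

lemma qfact_mul_wing_mul_wing_reverse {ε : ℕ} (hε : ε ≤ 1) (h g : ℕ) (k : ℤ) :
    qfact q (h + g + ε) * wing ε h k * wing ε g k
      = ∑ t ∈ range (h + 1), q ^ (((h : ℤ) - t) * (g - t)) * qfactInv (h - t)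
          * qfactInv (g - t) * wing ε t k := by
  rcases lt_or_ge ((h : ℤ) + ε - k) 0 with hk | hk
  · rw [wing_eq_zero (Or.inr hk), sum_eq_zero]
    · ring
    · intro t ht
      rw [mem_range] at ht
      rw [wing_eq_zero (by omega), mul_zero]
  · obtain ⟨M, hM⟩ := Int.eq_ofNat_of_zero_le hk
    have hV := qVandermonde_reverse M (g + k) (h + k) (h + g + ε) (by rw [← hM]; push_cast; ring)
    rw [sum_wing_reindex hε h g M k hM.symm fun j => q ^ (j * (g + k - (h + k) + j))] at hV
    rw [← hM] at hV
    rw [wing, wing, show (g : ℤ) + ε - k = ((h + g + ε : ℕ) : ℤ) - (h + k) by push_cast; ring]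
    refine Eq.trans ?_ (hV.symm.trans (sum_congr rfl fun t _ => ?_))
    · ring
    · rw [show (g : ℤ) + k - (h + k) + (h - t) = g - t by ring]

lemma choose_two_succ (k : ℤ) : (k + 1) * (k + 1 - 1) / 2 = k * (k - 1) / 2 + k := by
  rw [show (k + 1) * (k + 1 - 1) = k * (k - 1) + k * 2 by ring,
    Int.add_mul_ediv_right _ _ two_ne_zero]

lemma choose_two_neg (k : ℤ) : -k * (-k - 1) / 2 = k * (k - 1) / 2 + k := by
  rw [show -k * (-k - 1) = k * (k - 1) + k * 2 by ring, Int.add_mul_ediv_right _ _ two_ne_zero]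

lemma sum_Icc_neg_telescope (N : ℕ) (G : ℤ → RatFunc ℚ) :
    ∑ k ∈ Icc (-(N : ℤ)) N, (G k - G (k + 1)) = G (-N) - G (N + 1) := by
  have h := sum_range_sub' (fun i : ℕ => G (i - N)) (2 * N + 1)
  push_cast at h
  rw [zero_sub, show 2 * (N : ℤ) + 1 - N = N + 1 by ring] at h
  rw [← h]
  refine sum_bij' (fun k _ => (k + N).toNat) (fun i _ => (i : ℤ) - N) ?_ ?_ ?_ ?_ ?_
  · intro k hk
    rw [mem_Icc] at hk
    rw [mem_range]
    omega
  · intro i hi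
    rw [mem_range] at hi
    rw [mem_Icc]
    omega
  · intro k hk
    rw [mem_Icc] at hk
    omega
  · intro i _
    omega
  · intro k hk
    rw [mem_Icc] at hk
    rw [Int.toNat_of_nonneg (by omega), add_sub_cancel_right,
      show k + N + 1 - (N : ℤ) = k + 1 by ring]

lemma sum_Icc_neg_comp_neg (N : ℕ) (G : ℤ → RatFunc ℚ) :
    ∑ k ∈ Icc (-(N : ℤ)) N, G (-k) = ∑ k ∈ Icc (-(N : ℤ)) N, G k :=
  sum_equiv (Equiv.neg ℤ) (fun k => by simp only [mem_Icc, Equiv.neg_apply]; omega) fun _ _ => rfl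

/-- The symmetrization of the alternating weight `(-1)^k q^(k(k-1)/2)` under `k ↦ -k`. -/
def symWeight (k : ℤ) : RatFunc ℚ := (1 + q ^ k) * ((-1) ^ k * q ^ (k * (k - 1) / 2))

lemma sum_symWeight_mul_wing {t N : ℕ} (ht : t ≤ N) :
    ∑ k ∈ Icc (-(N : ℤ)) N, symWeight k * wing 0 t k = if t = 0 then 2 else 0 := by
  split_ifs with h0
  · subst h0
    rw [sum_eq_single 0]
    · simp [symWeight, wing, qfactInv_zero]
      norm_num
    · intro k _ hk
      rw [wing_eq_zero (by push_cast; omega), mul_zero]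
    · simp
  · refine mul_left_cancel₀ (qint_ne_zero h0) ?_
    let G : ℤ → RatFunc ℚ := fun k =>
      (-1) ^ k * q ^ (k * (k - 1) / 2) * qfactInv (t + k - 1) * qfactInv (t - k)
    have hG : ∀ k, qint q t * (symWeight k * wing 0 t k) = G k - G (k + 1) := by
      intro k
      have h1 := qintZ_mul_qfactInv (t + k)
      have h2 := qintZ_mul_qfactInv (t - k)
      have h3 := one_add_X_zpow_mul_qintZ t k
      rw [qintZ_natCast] at h3
      have h7 : ((-1 : RatFunc ℚ)) ^ (k + 1) = -(-1) ^ k := by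
        rw [zpow_add₀ (by norm_num), zpow_one]; ring
      simp only [G, symWeight, wing, choose_two_succ, zpow_add₀ X_ne_zero, h7, Nat.cast_zero,
        add_zero]
      rw [show (t : ℤ) + (k + 1) - 1 = t + k by ring, show (t : ℤ) - (k + 1) = t - k - 1 by ring,
        ← h1, ← h2]
      linear_combination ((-1) ^ k * q ^ (k * (k - 1) / 2)
        * qfactInv (t + k) * qfactInv (t - k)) * h3
    rw [mul_sum, sum_congr rfl fun k _ => hG k, sum_Icc_neg_telescope, mul_zero]
    simp only [G]
    rw [qfactInv_of_neg (z := (t : ℤ) + -N - 1) (by omega),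
      qfactInv_of_neg (z := (t : ℤ) - (N + 1)) (by omega)]
    ring

lemma sum_symWeight_mul_wing_mul_wing {n N c : ℕ} (hn : n ≤ N) (hc : c ≤ 1) (m : ℕ) :
    ∃ e : ℕ, qfact q n * qfact q m * (qfact q (n + m) *
      ∑ k ∈ Icc (-(N : ℤ)) N, symWeight k * q ^ ((c : ℤ) * k ^ 2) * wing 0 n k * wing 0 m k)
        = 2 * q ^ e := by
  obtain ⟨θ, e, he, hθ⟩ : ∃ (θ : ℕ → ℤ) (e : ℕ), θ 0 = e ∧ ∀ k : ℤ,
      q ^ ((c : ℤ) * k ^ 2) * (qfact q (n + m) * wing 0 n k * wing 0 m k)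
        = ∑ t ∈ range (n + 1), q ^ θ t * qfactInv (n - t) * qfactInv (m - t) * wing 0 t k := by
    obtain rfl | rfl : c = 0 ∨ c = 1 := by omega
    · refine ⟨fun t => ((n : ℤ) - t) * (m - t), n * m, by simp, fun k => ?_⟩
      rw [Nat.cast_zero, zero_mul, zpow_zero, one_mul]
      exact qfact_mul_wing_mul_wing_reverse zero_le_one n m k
    · refine ⟨fun t => (t : ℤ) ^ 2, 0, by simp, fun k => ?_⟩
      have h := qfact_mul_wing_mul_wing zero_le_one n m k
      rw [add_zero] at h
      rw [h, mul_sum]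
      refine sum_congr rfl fun t _ => ?_
      beta_reduce
      rw [show (t : ℤ) ^ 2 = ((1 : ℕ) : ℤ) * k ^ 2 + (t + (0 : ℕ) - k) * (t + k) by push_cast; ring,
        zpow_add₀ X_ne_zero]
      ring
  refine ⟨e, ?_⟩
  have key : qfact q (n + m) * ∑ k ∈ Icc (-(N : ℤ)) N,
      symWeight k * q ^ ((c : ℤ) * k ^ 2) * wing 0 n k * wing 0 m k
      = ∑ t ∈ range (n + 1), q ^ θ t * qfactInv (n - t) * qfactInv (m - t)
          * ∑ k ∈ Icc (-(N : ℤ)) N, symWeight k * wing 0 t k := by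
    simp_rw [mul_sum]
    rw [sum_comm]
    refine sum_congr rfl fun k _ => ?_
    have h := congrArg (symWeight k * ·) (hθ k)
    simp only [mul_sum] at h
    refine Eq.trans ?_ (h.trans (sum_congr rfl fun t _ => ?_)) <;> ring
  rw [key, sum_eq_single 0]
  · rw [sum_symWeight_mul_wing (Nat.zero_le N), if_pos rfl, he, zpow_natCast, Nat.cast_zero,
      sub_zero, sub_zero]
    linear_combination (2 * q ^ e * (qfact q m * qfactInv m)) * qfact_mul_qfactInv n
      + 2 * q ^ e * qfact_mul_qfactInv m
  · intro t ht h0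
    rw [mem_range] at ht
    rw [sum_symWeight_mul_wing (by omega), if_neg h0, mul_zero]
  · simp

lemma sum_wing_mul_wing_mem {n N c : ℕ} (hn : n ≤ N) (hc : c ≤ 1) (m : ℕ) :
    qfact q n * qfact q m * qfact q (m + (n + 1)) *
      ∑ k ∈ Icc (-(N : ℤ)) N, (-1) ^ k * q ^ ((c : ℤ) * k ^ 2 + k * (k - 1) / 2)
        * wing 0 n k * wing 1 m k ∈ nonnegPoly := by
  obtain ⟨e, he⟩ := sum_symWeight_mul_wing_mul_wing hn hc (m + 1)
  set T : ℤ → RatFunc ℚ := fun k => (-1) ^ k * q ^ ((c : ℤ) * k ^ 2 + k * (k - 1) / 2)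
    * wing 0 n k * wing 1 m k with hT
  have hsym : ∀ k, T k + T (-k) = qint q (m + 1) *
      (symWeight k * q ^ ((c : ℤ) * k ^ 2) * wing 0 n k * wing 0 (m + 1) k) := by
    intro k
    have h1 := qintZ_mul_qfactInv (m + 1 + k)
    have h2 := qintZ_mul_qfactInv (m + 1 - k)
    have h3 := one_add_X_zpow_mul_qintZ ((m + 1 : ℕ) : ℤ) k
    rw [qintZ_natCast] at h3
    push_cast at h3
    have h7 : ((-1 : RatFunc ℚ)) ^ (-k) = (-1) ^ k := by
      rw [zpow_neg, ← inv_zpow, inv_neg_one]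
    simp only [hT, symWeight, wing, choose_two_neg, zpow_add₀ X_ne_zero, h7, neg_sq, Nat.cast_zero,
      add_zero, Nat.cast_add, Nat.cast_one, sub_neg_eq_add, ← sub_eq_add_neg]
    rw [show (m : ℤ) + k = m + 1 + k - 1 by ring, show (m : ℤ) - k = m + 1 - k - 1 by ring,
      ← h1, ← h2]
    linear_combination -(q ^ ((c : ℤ) * k ^ 2) * (-1) ^ k * q ^ (k * (k - 1) / 2)
      * qfactInv (n + k) * qfactInv (n - k) * qfactInv (m + 1 + k) * qfactInv (m + 1 - k)) * h3
  have hsum : 2 * ∑ k ∈ Icc (-(N : ℤ)) N, T k = qint q (m + 1) *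
      ∑ k ∈ Icc (-(N : ℤ)) N,
        symWeight k * q ^ ((c : ℤ) * k ^ 2) * wing 0 n k * wing 0 (m + 1) k := by
    rw [two_mul]
    nth_rewrite 2 [← sum_Icc_neg_comp_neg]
    rw [← sum_add_distrib, mul_sum]
    exact sum_congr rfl fun k _ => hsym k
  have hval : qfact q n * qfact q m * qfact q (m + (n + 1)) * ∑ k ∈ Icc (-(N : ℤ)) N, T k
      = q ^ e := by
    refine mul_left_cancel₀ (two_ne_zero (α := RatFunc ℚ)) ?_
    rw [← he, qfact_succ m, show n + (m + 1) = m + (n + 1) by ring]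
    linear_combination (qfact q n * qfact q m * qfact q (m + (n + 1))) * hsum
  rw [hval]
  exact pow_mem X_mem_nonnegPoly e

/-- For a sequence `h, g₁, …, gₗ`, the product of the `[g_i + g_{i+1} + ε]!` over adjacent
entries, times `[gₗ + y]!`. -/
def factChain (ε y : ℕ) : ℕ → List ℕ → RatFunc ℚ
  | h, [] => qfact q (h + y)
  | h, g :: l => qfact q (h + g + ε) * factChain ε y g l

/-- The `ℕ[q]`-cone spanned by the functions `k ↦ [t]![t+y]!/([t+k]![t+ε-k]!)` with `t ≤ N`. -/
def wingCone (ε y N : ℕ) : Submodule nonnegPoly (ℤ → RatFunc ℚ) :=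
  Submodule.span nonnegPoly
    {φ | ∃ t ≤ N, φ = fun k => qfact q t * qfact q (t + y) * wing ε t k}

lemma exists_qfactInv_mul_factChain_eq (ε y : ℕ) {t g : ℕ} (ht : t ≤ g) (l : List ℕ) :
    ∃ β ∈ nonnegPoly, qfactInv (g - t) * factChain ε y g l = β * factChain ε y t l := by
  have key : ∀ z : ℕ, ∃ β ∈ nonnegPoly,
      qfactInv (g - t) * qfact q (g + z) = β * qfact q (t + z) := by
    intro z
    refine ⟨_, qfact_mul_qfactInv_sub_mem (Nat.add_le_add_right ht z), ?_⟩
    rw [show ((g + z : ℕ) : ℤ) - ((t + z : ℕ) : ℤ) = g - t by push_cast; ring]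
    linear_combination -(qfactInv (g - t) * qfact q (g + z)) * qfact_mul_qfactInv (t + z)
  cases l with
  | nil => exact key y
  | cons g' l =>
    obtain ⟨β, hβ, h⟩ := key (g' + ε)
    refine ⟨β, hβ, ?_⟩
    simp only [factChain, add_assoc]
    rw [← mul_assoc, h, mul_assoc]

lemma factChain_mul_prod_wing_mem {ε : ℕ} (hε : ε ≤ 1) (y N : ℕ) (l : List ℕ) :
    ∀ h c : ℕ, h ≤ N → c ≤ l.length →
      (fun k : ℤ => qfact q h * factChain ε y h l * q ^ ((c : ℤ) * (k ^ 2 - ε * k))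
        * (wing ε h k * (l.map (wing ε · k)).prod)) ∈ wingCone ε y N := by
  induction l with
  | nil =>
    intro h c hh hc
    obtain rfl : c = 0 := by simpa using hc
    refine Submodule.subset_span ⟨h, hh, ?_⟩
    simp [factChain]
  | cons g l ih =>
    intro h c hh hc
    obtain ⟨θ, d, hd, hθ, hw⟩ : ∃ (θ : ℕ → ℤ) (d : ℕ), d ≤ l.length ∧
        (∀ t, t ≤ h → t ≤ g → 0 ≤ θ t) ∧ ∀ k : ℤ,
          q ^ ((c : ℤ) * (k ^ 2 - ε * k)) * (qfact q (h + g + ε) * wing ε h k * wing ε g k)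
            = ∑ t ∈ range (h + 1), q ^ θ t * q ^ ((d : ℤ) * (k ^ 2 - ε * k)) * qfactInv (h - t)
                * qfactInv (g - t) * wing ε t k := by
      rcases c with _ | c
      · refine ⟨fun t => ((h : ℤ) - t) * (g - t), 0, Nat.zero_le _, fun t h1 h2 => ?_, fun k => ?_⟩
        · exact mul_nonneg (by omega) (by omega)
        · rw [qfact_mul_wing_mul_wing_reverse hε]
          simp
      · refine ⟨fun t => (t : ℤ) ^ 2 + ε * t, c, by simpa using hc, fun t _ _ => by positivity,
          fun k => ?_⟩
        rw [qfact_mul_wing_mul_wing hε, mul_sum]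
        refine sum_congr rfl fun t _ => ?_
        rw [← zpow_add₀ X_ne_zero,
          show (t : ℤ) ^ 2 + ε * t + c * (k ^ 2 - ε * k) =
            ((c + 1 : ℕ) : ℤ) * (k ^ 2 - ε * k) + ((t : ℤ) + ε - k) * (t + k) by push_cast; ring,
          zpow_add₀ X_ne_zero]
        ring
    have hsum : (fun k : ℤ => qfact q h * factChain ε y h (g :: l)
          * q ^ ((c : ℤ) * (k ^ 2 - ε * k)) * (wing ε h k * ((g :: l).map (wing ε · k)).prod))
        = ∑ t ∈ range (h + 1), fun k : ℤ => q ^ θ t * (qfact q h * qfactInv (h - t))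
            * (qfactInv (g - t) * factChain ε y g l) * q ^ ((d : ℤ) * (k ^ 2 - ε * k))
            * (wing ε t k * (l.map (wing ε · k)).prod) := by
      funext k
      have hk := congrArg (qfact q h * factChain ε y g l * (l.map (wing ε · k)).prod * ·) (hw k)
      simp only [mul_sum] at hk
      rw [Finset.sum_apply]
      simp only [factChain, List.map_cons, List.prod_cons]
      refine Eq.trans ?_ (hk.trans (sum_congr rfl fun t _ => ?_)) <;> ring
    rw [hsum]
    refine Submodule.sum_mem _ fun t ht => ?_
    rw [mem_range] at ht
    rcases lt_or_ge g t with hgt | hgt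
    · rw [qfactInv_of_neg (z := (g : ℤ) - t) (by omega)]
      simp only [zero_mul, mul_zero]
      exact Submodule.zero_mem _
    · obtain ⟨β, hβ, hβ'⟩ := exists_qfactInv_mul_factChain_eq ε y hgt l
      have hcoef : q ^ θ t * (qfact q h * qfactInv (h - t) * qfactInv t) * β ∈ nonnegPoly :=
        mul_mem (mul_mem (X_zpow_mem_nonnegPoly (hθ t (by omega) hgt))
          (qfact_mul_qfactInv_sub_mem (by omega))) hβ
      convert Submodule.smul_mem _ (⟨_, hcoef⟩ : nonnegPoly) (ih t d (by omega) hd) using 1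
      funext k
      rw [hβ', Pi.smul_apply, Subsemiring.smul_def, smul_eq_mul]
      linear_combination -(q ^ θ t * qfact q h * qfactInv (h - t) * β * factChain ε y t l
        * q ^ ((d : ℤ) * (k ^ 2 - ε * k)) * (wing ε t k * (l.map (wing ε · k)).prod))
          * qfact_mul_qfactInv t

lemma prod_range_succ_cyclic {M : Type*} [CommMonoid M] (φ : ℕ → ℕ → M) (m : ℕ → ℕ) (r : ℕ) :
    ∏ i ∈ range (r + 1), φ (m i) (m ((i + 1) % (r + 1)))
      = (∏ i ∈ range r, φ (m i) (m (i + 1))) * φ (m r) (m 0) := by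
  rw [prod_range_succ, Nat.mod_self]
  congr 1
  refine prod_congr rfl fun i hi => ?_
  rw [mem_range] at hi
  rw [Nat.mod_eq_of_lt (by omega)]

lemma factChain_map_range (ε y : ℕ) (r : ℕ) (m : ℕ → ℕ) :
    factChain ε y (m 0) ((List.range r).map fun i => m (i + 1))
      = (∏ i ∈ range r, qfact q (m i + m (i + 1) + ε)) * qfact q (m r + y) := by
  induction r generalizing m with
  | zero => simp [factChain]
  | succ r ih =>
    rw [List.range_succ_eq_map, List.map_cons, List.map_map, factChain, prod_range_succ']
    have h := ih fun i => m (i + 1)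
    simp only [zero_add] at h ⊢
    rw [mul_right_comm, ← h, mul_comm]
    rfl

lemma prod_qbinom_cyclic (ε r : ℕ) (m : ℕ → ℕ) (k : ℤ) :
    ∏ i ∈ range (r + 1), qbinom q ((m i : ℤ) + (m ((i + 1) % (r + 1)) : ℤ) + ε) ((m i : ℤ) + k)
      = (∏ i ∈ range r, qfact q (m i + m (i + 1) + ε)) * qfact q (m 0 + m r + ε)
        * (wing ε (m 0) k * (((List.range r).map fun i => m (i + 1)).map (wing ε · k)).prod) := by
  have hterm : ∀ x y : ℕ, qbinom q ((x : ℤ) + (y : ℤ) + ε) ((x : ℤ) + k)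
      = qfact q (x + y + ε) * qfactInv (x + k) * qfactInv (y + ε - k) := by
    intro x y
    rw [← Nat.cast_add, ← Nat.cast_add, qbinom_eq]
    congr 2
    push_cast
    ring
  have hshift : ∏ i ∈ range (r + 1), qfactInv (m ((i + 1) % (r + 1)) + ε - k)
      = ∏ i ∈ range (r + 1), qfactInv (m i + ε - k) := by
    rw [prod_range_succ_cyclic (fun _ y => qfactInv ((y : ℤ) + ε - k)) m r,
      prod_range_succ' (fun i => qfactInv ((m i : ℤ) + ε - k))]
  have hwing : ∏ i ∈ range (r + 1), wing ε (m i) k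
      = wing ε (m 0) k * (((List.range r).map fun i => m (i + 1)).map (wing ε · k)).prod := by
    rw [prod_range_succ', mul_comm, List.map_map, Finset.prod_range, ← List.prod_ofFn,
      List.ofFn_eq_map, ← List.map_coe_finRange_eq_range, List.map_map]
    rfl
  simp_rw [hterm]
  rw [prod_mul_distrib, prod_mul_distrib, hshift, mul_assoc, ← prod_mul_distrib,
    prod_range_succ_cyclic (fun x y => qfact q (x + y + ε)) m r, add_comm (m r), ← hwing]
  rfl

lemma sum_mul_mem_of_mem_span {s : Set (ℤ → RatFunc ℚ)} (I : Finset ℤ) (w : ℤ → RatFunc ℚ)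
    (hs : ∀ φ ∈ s, ∑ k ∈ I, w k * φ k ∈ nonnegPoly) {φ : ℤ → RatFunc ℚ}
    (hφ : φ ∈ Submodule.span nonnegPoly s) : ∑ k ∈ I, w k * φ k ∈ nonnegPoly := by
  induction hφ using Submodule.span_induction with
  | mem φ h => exact hs φ h
  | zero => simp [zero_mem]
  | add φ ψ _ _ h1 h2 =>
    simp only [Pi.add_apply, mul_add, sum_add_distrib]
    exact add_mem h1 h2
  | smul p φ _ h =>
    simp only [Pi.smul_apply, Subsemiring.smul_def, smul_eq_mul, mul_left_comm _ (p : RatFunc ℚ)]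
    rw [← mul_sum]
    exact mul_mem p.2 h

lemma sum_factChain_mul_factChain_mem {N c d e n m : ℕ} (hn : n ≤ N) (hc : c ≤ 1) (M : ℕ)
    (P : RatFunc ℚ) (l l' : List ℕ) (hd : d ≤ l.length) (he : e ≤ l'.length)
    (hP : ∀ y, factChain 1 y m l' = P * qfact q (M + y)) :
    ∑ k ∈ Icc (-(N : ℤ)) N, (-1) ^ k * q ^ ((c : ℤ) * k ^ 2 + k * (k - 1) / 2)
        * (qfact q m * P * q ^ ((e : ℤ) * (k ^ 2 - k))
          * (wing 1 m k * (l'.map (wing 1 · k)).prod))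
        * (qfact q n * factChain 0 (M + 1) n l * q ^ ((d : ℤ) * k ^ 2)
          * (wing 0 n k * (l.map (wing 0 · k)).prod)) ∈ nonnegPoly := by
  have hφ := factChain_mul_prod_wing_mem zero_le_one (M + 1) N l n d hn hd
  simp only [Nat.cast_zero, zero_mul, sub_zero] at hφ
  refine sum_mul_mem_of_mem_span _ _ ?_ hφ
  rintro _ ⟨t, ht, rfl⟩
  have hψ := factChain_mul_prod_wing_mem le_rfl (t + 1) m l' m e le_rfl he
  simp only [Nat.cast_one, one_mul] at hψ
  have := sum_mul_mem_of_mem_span (Icc (-(N : ℤ)) N)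
    (fun k => (-1) ^ k * q ^ ((c : ℤ) * k ^ 2 + k * (k - 1) / 2) * (qfact q t * wing 0 t k)) ?_ hψ
  · convert this using 1
    refine sum_congr rfl fun k _ => ?_
    rw [hP, show t + (M + 1) = M + (t + 1) by ring]
    ring
  · rintro _ ⟨u, _, rfl⟩
    have h := sum_wing_mul_wing_mem ht hc u
    rw [mul_sum] at h
    convert h using 1
    refine sum_congr rfl fun k _ => ?_
    ring

/-- Theorem 2: for `r, s > 1`, positive integers `m_1, …, m_r` and
`n_1, …, n_s` (with cyclic conventions), `0 ≤ a ≤ s` and `1 ≤ b ≤ r`,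
the alternating sum `F_{r,s}^{(b)}(m; n; a; q)` is a polynomial in `q`
with nonnegative integer coefficients. -/
theorem F_isNonnegPoly (r s : ℕ) (hr : 1 < r) (hs : 1 < s) (m n : ℕ → ℕ)
    (hm : ∀ i < r, 0 < m i) (hn : ∀ j < s, 0 < n j)
    (a b : ℕ) (ha : a ≤ s) (hb1 : 1 ≤ b) (hbr : b ≤ r) :
    IsNonnegPoly (F r s a b m n RatFunc.X) := by
  obtain ⟨r, rfl⟩ : ∃ r', r = r' + 1 := ⟨r - 1, by omega⟩
  obtain ⟨s, rfl⟩ : ∃ s', s = s' + 1 := ⟨s - 1, by omega⟩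
  obtain ⟨b, rfl⟩ : ∃ b', b = b' + 1 := ⟨b - 1, by omega⟩
  obtain ⟨c, d, hc, hd, rfl⟩ : ∃ c d, c ≤ 1 ∧ d ≤ s ∧ a = c + d := by
    rcases Nat.lt_or_ge s a with h | h
    · exact ⟨1, s, le_rfl, le_rfl, by omega⟩
    · exact ⟨0, a, zero_le_one, h, by omega⟩
  rw [isNonnegPoly_iff_mem]
  have key := sum_factChain_mul_factChain_mem (le_refl (n 0)) hc (m r) _
    ((List.range s).map fun i => n (i + 1)) ((List.range r).map fun i => m (i + 1))
    (d := d) (e := b) (by simpa using hd) (by simp; omega)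
    (fun y => factChain_map_range 1 y r m)
  convert key using 1
  rw [F, mul_sum]
  refine sum_congr rfl fun k _ => ?_
  have hm' := prod_qbinom_cyclic 1 r m k
  have hn' := prod_qbinom_cyclic 0 s n k
  simp only [Nat.cast_one, Nat.cast_zero, add_zero] at hm' hn'
  have hexp : ((c + d : ℕ) : ℤ) * k ^ 2 + (2 * ((b + 1 : ℕ) : ℤ) - 1) * (k * (k - 1) / 2)
      = (c * k ^ 2 + k * (k - 1) / 2) + b * (k ^ 2 - k) + d * k ^ 2 := by
    have h2 : 2 * (k * (k - 1) / 2) = k * (k - 1) :=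
      Int.mul_ediv_cancel' (Int.even_mul_pred_self k).two_dvd
    push_cast
    linear_combination (b : ℤ) * h2
  rw [hm', hn', hexp, factChain_map_range, zpow_add₀ X_ne_zero, zpow_add₀ X_ne_zero]
  simp only [add_tsub_cancel_right, add_zero]
  rw [show n s + (m r + 1) = m r + n s + 1 by ring]
  have h1 := qfact_ne_zero (m 0 + m r + 1)
  have h2 := qfact_ne_zero (n 0 + n s)
  rw [div_mul_eq_mul_div, div_eq_iff (mul_ne_zero h1 h2)]
  ring

end
end

section
/- Let r, s > 1, let m_1, ..., m_r be nonnegative integers and n_1, ..., n_s positive integers with cyclic conventions m_{r+1} = m_1 and n_{s+1} = n_1, and let 0 ≤ a ≤ s and 1 ≤ b ≤ r. Then the following reciprocity holds as an identity of rational functions: F_{r,s}^{(b)}(m; n; a; q^{-1}) = q^{-Δ(m;n)} · F_{r,s}^{(r-b+1)}(m; n; s-a; q), where Δ(m;n) = C(m_1,2) + C(n_1,2) + C(m_r+n_s+1,2) - C(m_1+m_r+1,2) - C(n_1+n_s,2) + Σ_{i=1}^{r} m_i(m_{i+1}+1) + Σ_{j=1}^{s} n_j n_{j+1}, with C(N,2)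 = N(N-1)/2. -/
open Finset

noncomputable section

/-- The exponent `Δ(m;n)` from the reciprocity lemma:
`Δ = C(m_1,2) + C(n_1,2) + C(m_r+n_s+1,2) - C(m_1+m_r+1,2) - C(n_1+n_s,2)
   + Σ_{i=1}^{r} m_i(m_{i+1}+1) + Σ_{j=1}^{s} n_j n_{j+1}`. -/
def delta (r s : ℕ) (m n : ℕ → ℕ) : ℤ :=
  ((m 0).choose 2 : ℤ) + ((n 0).choose 2 : ℤ) +
      ((m (r - 1) + n (s - 1) + 1).choose 2 : ℤ) -
    ((m 0 + m (r - 1) + 1).choose 2 : ℤ) - ((n 0 + n (s - 1)).choose 2 : ℤ) +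
    ∑ i ∈ Finset.range r, (m i : ℤ) * ((m ((i + 1) % r) : ℤ) + 1) +
    ∑ j ∈ Finset.range s, (n j : ℤ) * (n ((j + 1) % s) : ℤ)

theorem qint_inv {x : RatFunc ℚ} (hx : x ≠ 0) (n : ℕ) :
    qint x⁻¹ (n + 1) = x ^ (-(n : ℤ)) * qint x (n + 1) := by
  unfold qint
  by_cases h1 : x = 1
  · simp [h1]
  have h2 : 1 - x ≠ 0 := sub_ne_zero.mpr (Ne.symm h1)
  have h3 : 1 - x⁻¹ ≠ 0 := by
    rw [sub_ne_zero]
    exact fun h => h1 (inv_eq_one.mp h.symm)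
  rw [zpow_neg, zpow_natCast, ← mul_div_assoc, div_eq_div_iff h3 h2]
  have h4 : x ^ n ≠ 0 := pow_ne_zero n hx
  rw [inv_pow, pow_succ]
  field_simp
  ring

theorem qfact_inv {x : RatFunc ℚ} (hx : x ≠ 0) (n : ℕ) :
    qfact x⁻¹ n = x ^ (-(n.choose 2 : ℤ)) * qfact x n := by
  induction n with
  | zero => simp [qfact]
  | succ n ih =>
    have step (y : RatFunc ℚ) : qfact y (n + 1) = qfact y n * qint y (n + 1) :=
      Finset.prod_range_succ _ _
    rw [step, step, ih, qint_inv hx, Nat.choose_succ_succ' n 1, Nat.choose_one_right]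
    have h : (-((n + n.choose 2 : ℕ) : ℤ)) = -(n.choose 2 : ℤ) + -(n : ℤ) := by
      push_cast; ring
    rw [h, zpow_add₀ hx]
    ring

theorem two_mul_choose_two (n : ℕ) : 2 * (n.choose 2 : ℤ) = n * (n - 1) := by
  induction n with
  | zero => simp
  | succ n ih =>
    rw [Nat.choose_succ_succ' n 1, Nat.choose_one_right]
    push_cast
    linarith

theorem qbinom_inv {x : RatFunc ℚ} (hx : x ≠ 0) (N K : ℤ) :
    qbinom x⁻¹ N K = x ^ (-(K * (N - K))) * qbinom x N K := by
  unfold qbinom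
  split_ifs with h
  · obtain ⟨k, rfl⟩ := Int.eq_ofNat_of_zero_le h.1
    obtain ⟨l, hl⟩ := Int.eq_ofNat_of_zero_le (sub_nonneg.mpr h.2)
    obtain rfl : N = ((k + l : ℕ) : ℤ) := by push_cast; omega
    rw [hl]
    simp only [Int.toNat_natCast, qfact_inv hx]
    have e : -((k + l).choose 2 : ℤ) =
        -((k : ℤ) * l) + (-(k.choose 2 : ℤ) + -(l.choose 2 : ℤ)) := by
      have h1 := two_mul_choose_two (k + l)
      have h2 := two_mul_choose_two k
      have h3 := two_mul_choose_two l
      push_cast at h1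
      linarith
    have hk : x ^ (-(k.choose 2 : ℤ)) ≠ 0 := zpow_ne_zero _ hx
    have hl' : x ^ (-(l.choose 2 : ℤ)) ≠ 0 := zpow_ne_zero _ hx
    rw [e, zpow_add₀ hx, zpow_add₀ hx, mul_mul_mul_comm (x ^ (-(k.choose 2 : ℤ))), mul_assoc,
      mul_left_comm, mul_div_mul_left _ _ (mul_ne_zero hk hl'), mul_div_assoc]
  · simp

theorem sum_range_cyclic_succ (r : ℕ) (f : ℕ → ℤ) :
    ∑ i ∈ Finset.range r, f ((i + 1) % r) = ∑ i ∈ Finset.range r, f i := by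
  cases r with
  | zero => simp
  | succ r =>
    rw [Finset.sum_range_succ, Finset.sum_range_succ', Nat.mod_self]
    congr 1
    refine Finset.sum_congr rfl fun i hi => ?_
    rw [Nat.mod_eq_of_lt (Nat.succ_lt_succ (Finset.mem_range.mp hi))]

theorem zpow_sum {x : RatFunc ℚ} (hx : x ≠ 0) (s : Finset ℕ) (f : ℕ → ℤ) :
    x ^ (∑ i ∈ s, f i) = ∏ i ∈ s, x ^ f i := by
  induction s using Finset.induction_on with
  | empty => simp
  | insert a s ha ih => rw [Finset.sum_insert ha, Finset.prod_insert ha, zpow_add₀ hx, ih]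

/-- Both products of `F` are instances of this one, with `c = 1` and `c = 0`. -/
theorem prod_qbinom_cyclic_inv {x : RatFunc ℚ} (hx : x ≠ 0) (r : ℕ) (m : ℕ → ℕ) (c k : ℤ) :
    ∏ i ∈ Finset.range r, qbinom x⁻¹ ((m i : ℤ) + (m ((i + 1) % r) : ℤ) + c) ((m i : ℤ) + k) =
      x ^ (-(∑ i ∈ Finset.range r, (m i : ℤ) * ((m ((i + 1) % r) : ℤ) + c)) +
          r * (k ^ 2 - c * k)) *
        ∏ i ∈ Finset.range r, qbinom x ((m i : ℤ) + (m ((i + 1) % r) : ℤ) + c) ((m i : ℤ) + k) := by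
  simp_rw [qbinom_inv hx, Finset.prod_mul_distrib, ← zpow_sum hx]
  congr 2
  have hcyc := sum_range_cyclic_succ r fun i => (m i : ℤ)
  have hterm (i : ℕ) : -(((m i : ℤ) + k) * ((m i : ℤ) + m ((i + 1) % r) + c - (m i + k))) =
      -((m i : ℤ) * (m ((i + 1) % r) + c)) + k * m i - k * m ((i + 1) % r) +
        (k ^ 2 - c * k) := by
    ring
  simp_rw [hterm, Finset.sum_add_distrib, Finset.sum_sub_distrib, Finset.sum_add_distrib,
    ← Finset.mul_sum, hcyc, Finset.sum_neg_distrib, Finset.sum_const, Finset.card_range,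
    nsmul_eq_mul]
  ring

/-- Collects the powers of `x` in a weighted quotient times a weighted product. -/
theorem collect_zpow {x : RatFunc ℚ} (hx : x ≠ 0) {A B C D E e₁ e₂ e₃ d f : ℤ}
    (h : -A - B - C + D + E + e₁ + e₂ + e₃ = d + f) (P₁ P₂ P₃ Q₁ Q₂ σ M N : RatFunc ℚ) :
    x ^ (-A) * P₁ * (x ^ (-B) * P₂) * (x ^ (-C) * P₃) / (x ^ (-D) * Q₁ * (x ^ (-E) * Q₂)) *
        (σ * x ^ e₁ * (x ^ e₂ * M) * (x ^ e₃ * N)) =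
      P₁ * P₂ * P₃ / (Q₁ * Q₂) * (x ^ d * (σ * x ^ f * M * N)) := by
  have key : x ^ (-A) * x ^ (-B) * x ^ (-C) * x ^ D * x ^ E * x ^ e₁ * x ^ e₂ * x ^ e₃ =
      x ^ d * x ^ f := by
    simp only [← zpow_add₀ hx]
    rw [← h]
    ring_nf
  rw [zpow_neg x D, zpow_neg x E]
  simp only [div_eq_mul_inv, mul_inv, inv_inv]
  linear_combination P₁ * P₂ * P₃ * Q₁⁻¹ * Q₂⁻¹ * σ * M * N * key

/-- Reciprocity: for `r, s > 1`, nonnegative `m_i`, positive `n_j`,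
`0 ≤ a ≤ s` and `1 ≤ b ≤ r`, as an identity of rational functions,
`F_{r,s}^{(b)}(m; n; a; q⁻¹) = q^{-Δ(m;n)} F_{r,s}^{(r-b+1)}(m; n; s-a; q)`. -/
theorem F_reciprocity (r s : ℕ) (hr : 1 < r) (hs : 1 < s) (m n : ℕ → ℕ)
    (hn : ∀ j < s, 0 < n j) (a b : ℕ) (ha : a ≤ s) (hb1 : 1 ≤ b) (hbr : b ≤ r) :
    F r s a b m n (RatFunc.X)⁻¹ =
      (RatFunc.X : RatFunc ℚ) ^ (-(delta r s m n)) *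
        F r s (s - a) (r - b + 1) m n RatFunc.X := by
  have hx : (RatFunc.X : RatFunc ℚ) ≠ 0 := RatFunc.X_ne_zero
  generalize (RatFunc.X : RatFunc ℚ) = x at hx ⊢
  unfold F
  rw [mul_left_comm, Finset.mul_sum, Finset.mul_sum, Finset.mul_sum]
  refine Finset.sum_congr rfl fun k _ => ?_
  have hm := prod_qbinom_cyclic_inv hx r m 1 k
  have hn' := prod_qbinom_cyclic_inv hx s n 0 k
  simp only [add_zero] at hn'
  rw [hm, hn']
  simp only [qfact_inv hx, inv_zpow', delta]
  obtain ⟨t, ht⟩ : (2 : ℤ) ∣ k * (k - 1) := (Int.even_mul_pred_self k).two_dvd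
  rw [ht, Int.mul_ediv_cancel_left t two_ne_zero]
  push_cast [Nat.cast_sub ha, Nat.cast_sub hbr]
  refine collect_zpow hx ?_ _ _ _ _ _ _ _ _
  linear_combination (r : ℤ) * ht

end
end
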